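/- arXiv:2301.03116 — 3 statements merged into one kernel-verified Lean document; each statement's English description precedes it below -/
import Mathlib

section
/- Let E be a real inner product space, let l : E → ℝ, let θ ∈ E, let L > 0 and let α satisfy 0 < α < 2/L. Suppose l is differentiable with base-point L-Lipschitz gradient on the closed ball of radius α·‖∇l(θ)‖ around θ. Let ε satisfy 0 ≤ ε < α·‖∇l(θ)‖ and set Δ = ‖∇l(θ)‖·ε + ε²/(2Lα² − 4α). Then the one-step gradient descent iterate θ' = θ − α·∇l(θ) satisfies l(θ') ≤ l(θ) − Δ. -/
/-!
Along the segment from `x` to `y` the derivative moves away from its value at `x` at most linearly,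
so integrating gives the quadratic upper model
`f y ≤ f x + ⟪∇f x, y - x⟫ + L / 2 * ‖y - x‖ ^ 2`. At `y = θ - α • ∇f θ` this is a decrease of
`c / 2 * ‖∇f θ‖ ^ 2` with `c = 2 * α - L * α ^ 2`, and `c > 0` precisely because `α * L < 2`. By
Young's inequality this decrease dominates `‖∇f θ‖ * ε - ε ^ 2 / (2 * c)`, which is `Δ`.
-/

open Set AffineMap
open scoped RealInnerProductSpace

theorem norm_image_sub_sub_le_of_norm_hasFDerivWithinAt_sub_le
    {E F : Type*} [NormedAddCommGroup E] [NormedSpace ℝ E] [NormedAddCommGroup F] [NormedSpace ℝ F]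
    {f : E → F} {f' : E → E →L[ℝ] F} {s : Set E} {x y : E} {L : ℝ} (hs : Convex ℝ s)
    (hx : x ∈ s) (hy : y ∈ s) (hf : ∀ z ∈ s, HasFDerivWithinAt f (f' z) s z)
    (hlip : ∀ z ∈ s, ‖f' z - f' x‖ ≤ L * ‖z - x‖) :
    ‖f y - f x - f' x (y - x)‖ ≤ L / 2 * ‖y - x‖ ^ 2 := by
  let remainder : ℝ → F := fun t ↦ f (lineMap x y t) - f x - t • f' x (y - x)
  have segment_mem : MapsTo (lineMap x y : ℝ → E) (Icc 0 1) s := fun t ht ↦ hs.lineMap_mem hx hy ht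
  have hasDeriv_remainder : ∀ t ∈ Icc (0 : ℝ) 1,
      HasDerivWithinAt remainder ((f' (lineMap x y t) - f' x) (y - x)) (Icc 0 1) t := by
    intro t ht
    have hf_line : HasDerivWithinAt (fun t : ℝ ↦ f (lineMap x y t))
        (f' (lineMap x y t) (y - x)) (Icc 0 1) t :=
      (hf _ (segment_mem ht)).comp_hasDerivWithinAt t hasDerivWithinAt_lineMap segment_mem
    exact ((hf_line.sub_const (f x)).sub
      ((hasDerivWithinAt_id t _).smul_const (f' x (y - x)))).congr_deriv (by simp)
  have hasDeriv_bound (t : ℝ) :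
      HasDerivAt (fun t : ℝ ↦ L / 2 * ‖y - x‖ ^ 2 * t ^ 2) (L * ‖y - x‖ ^ 2 * t) t :=
    ((hasDerivAt_pow 2 t).const_mul (L / 2 * ‖y - x‖ ^ 2)).congr_deriv (by push_cast; ring)
  have norm_deriv_le : ∀ t ∈ Ico (0 : ℝ) 1,
      ‖(f' (lineMap x y t) - f' x) (y - x)‖ ≤ L * ‖y - x‖ ^ 2 * t := by
    intro t ht
    calc ‖(f' (lineMap x y t) - f' x) (y - x)‖
        ≤ ‖f' (lineMap x y t) - f' x‖ * ‖y - x‖ := ContinuousLinearMap.le_opNorm _ _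
      _ ≤ L * ‖lineMap x y t - x‖ * ‖y - x‖ := by
        gcongr
        exact hlip _ (segment_mem (Ico_subset_Icc_self ht))
      _ = L * ‖y - x‖ ^ 2 * t := by
        rw [← dist_eq_norm (lineMap x y t), dist_lineMap_left, Real.norm_of_nonneg ht.1,
          dist_comm, dist_eq_norm]
        ring
  have remainder_le := image_norm_le_of_norm_deriv_right_le_deriv_boundary
    (fun t ht ↦ (hasDeriv_remainder t ht).continuousWithinAt)
    (fun t ht ↦ (hasDeriv_remainder t (Ico_subset_Icc_self ht)).mono_of_mem_nhdsWithin
      (Icc_mem_nhdsGE_of_mem ht))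
    (by simp [remainder]) hasDeriv_bound norm_deriv_le (right_mem_Icc.2 zero_le_one)
  simpa [remainder] using remainder_le

theorem mul_sub_sq_div_le {𝕜 : Type*} [Field 𝕜] [LinearOrder 𝕜] [IsStrictOrderedRing 𝕜]
    {a b c : 𝕜} (hc : 0 < c) : a * b - b ^ 2 / (2 * c) ≤ c / 2 * a ^ 2 := by
  have young := two_mul_le_add_mul_sq hc (a := a) (b := b)
  have : b ^ 2 / (2 * c) = c⁻¹ * b ^ 2 / 2 := by field_simp
  linarith

theorem sub_smul_mem_closedBall {E : Type*} [SeminormedAddCommGroup E] [NormedSpace ℝ E]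
    (x v : E) {a : ℝ} (ha : 0 ≤ a) : x - a • v ∈ Metric.closedBall x (a * ‖v‖) := by
  rw [mem_closedBall_iff_norm, sub_sub_cancel_left, norm_neg, norm_smul, Real.norm_of_nonneg ha]

section Gradient

-- `gradient` presupposes a complete space; asking for the derivative `innerSL ℝ (g z)` says that
-- `g` is the gradient field of `f` without it.
variable {E : Type*} [NormedAddCommGroup E] [InnerProductSpace ℝ E] {f : E → ℝ} {g : E → E}
  {s : Set E} {L : ℝ}

theorem le_add_inner_add_sq_of_norm_gradient_sub_le {x y : E} (hs : Convex ℝ s) (hx : x ∈ s)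
    (hy : y ∈ s) (hf : ∀ z ∈ s, HasFDerivWithinAt f (innerSL ℝ (g z)) s z)
    (hlip : ∀ z ∈ s, ‖g z - g x‖ ≤ L * ‖z - x‖) :
    f y ≤ f x + ⟪g x, y - x⟫ + L / 2 * ‖y - x‖ ^ 2 := by
  have taylor := norm_image_sub_sub_le_of_norm_hasFDerivWithinAt_sub_le hs hx hy hf
    (L := L) (fun z hz ↦ by simpa only [← map_sub, innerSL_apply_norm] using hlip z hz)
  rw [innerSL_apply_apply] at taylor
  linarith [Real.le_norm_self (f y - f x - ⟪g x, y - x⟫)]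

theorem image_gradient_step_le {θ : E} {α : ℝ} (hs : Convex ℝ s) (hθ : θ ∈ s)
    (hθ' : θ - α • g θ ∈ s) (hf : ∀ z ∈ s, HasFDerivWithinAt f (innerSL ℝ (g z)) s z)
    (hlip : ∀ z ∈ s, ‖g z - g θ‖ ≤ L * ‖z - θ‖) :
    f (θ - α • g θ) ≤ f θ - (2 * α - L * α ^ 2) / 2 * ‖g θ‖ ^ 2 := by
  have model := le_add_inner_add_sq_of_norm_gradient_sub_le hs hθ hθ' hf hlip
  rw [sub_sub_cancel_left, inner_neg_right, real_inner_smul_right, real_inner_self_eq_norm_sq,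
    norm_neg, norm_smul, mul_pow, Real.norm_eq_abs, sq_abs] at model
  linarith

theorem one_step_descent_with_Delta_general {θ : E} {α : ℝ} (hα : 0 < α) (hαL : α * L < 2)
    (hs : Convex ℝ s) (hθ : θ ∈ s) (hθ' : θ - α • g θ ∈ s)
    (hf : ∀ z ∈ s, HasFDerivWithinAt f (innerSL ℝ (g z)) s z)
    (hlip : ∀ z ∈ s, ‖g z - g θ‖ ≤ L * ‖z - θ‖) (ε : ℝ) :
    f (θ - α • g θ) ≤ f θ - (‖g θ‖ * ε + ε ^ 2 / (2 * L * α ^ 2 - 4 * α)) := by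
  have hc : 0 < 2 * α - L * α ^ 2 := by linarith [mul_pos hα (sub_pos.2 hαL)]
  have denominator_eq : 2 * L * α ^ 2 - 4 * α = -(2 * (2 * α - L * α ^ 2)) := by ring
  calc f (θ - α • g θ)
      ≤ f θ - (2 * α - L * α ^ 2) / 2 * ‖g θ‖ ^ 2 := image_gradient_step_le hs hθ hθ' hf hlip
    _ ≤ f θ - (‖g θ‖ * ε - ε ^ 2 / (2 * (2 * α - L * α ^ 2))) := by
      gcongr
      exact mul_sub_sq_div_le hc
    _ = f θ - (‖g θ‖ * ε + ε ^ 2 / (2 * L * α ^ 2 - 4 * α)) := by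
      rw [denominator_eq, div_neg, sub_eq_add_neg (‖g θ‖ * ε)]

end Gradient

theorem one_step_descent_with_Delta
    {E : Type*} [NormedAddCommGroup E] [InnerProductSpace ℝ E] [CompleteSpace E]
    (l : E → ℝ) (θ : E) (L α : ℝ) (hL : 0 < L) (hα : 0 < α) (hα2 : α < 2 / L)
    (hdiff : ∀ θ' : E, ‖θ' - θ‖ ≤ α * ‖gradient l θ‖ → DifferentiableAt ℝ l θ')
    (hlip : ∀ θ' : E, ‖θ' - θ‖ ≤ α * ‖gradient l θ‖ →
      ‖gradient l θ' - gradient l θ‖ ≤ L * ‖θ' - θ‖)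
    (ε : ℝ) (hε0 : 0 ≤ ε) (hε1 : ε < α * ‖gradient l θ‖)
    (Δ : ℝ) (hΔ : Δ = ‖gradient l θ‖ * ε + ε ^ 2 / (2 * L * α ^ 2 - 4 * α)) :
    l (θ - α • gradient l θ) ≤ l θ - Δ := by
  subst hΔ
  have hasFDeriv : ∀ z ∈ Metric.closedBall θ (α * ‖gradient l θ‖),
      HasFDerivWithinAt l (innerSL ℝ (gradient l z))
        (Metric.closedBall θ (α * ‖gradient l θ‖)) z := fun z hz ↦
    (hdiff z (mem_closedBall_iff_norm.1 hz)).hasGradientAt.hasFDerivAt.hasFDerivWithinAt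
  exact one_step_descent_with_Delta_general hα ((lt_div_iff₀ hL).1 hα2) (convex_closedBall θ _)
    (Metric.mem_closedBall_self (by positivity)) (sub_smul_mem_closedBall θ _ hα.le) hasFDeriv
    (fun z hz ↦ hlip z (mem_closedBall_iff_norm.1 hz)) ε
end

section
/- Let n be a positive integer and let F : (Fin n → ℝ) → ℝ be entry-wise concave on the unit cube. Then for every x̄ with all coordinates in [0,1] there exists a binary vector X with every coordinate in {0,1} such that F(X) ≤ F(x̄). -/
/-- `F` is entry-wise concave on the unit cube: for every index `i` and every point `x`
with all coordinates in `[0,1]`, the map `t ↦ F (Function.update x i t)` is concave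
on `[0,1]`. -/
def EntrywiseConcave (n : ℕ) (F : (Fin n → ℝ) → ℝ) : Prop :=
  ∀ (i : Fin n) (x : Fin n → ℝ), (∀ j, x j ∈ Set.Icc (0 : ℝ) 1) →
    ConcaveOn ℝ (Set.Icc (0 : ℝ) 1) (fun t => F (Function.update x i t))

/-!
A quasiconcave function on the convex hull of `t` does not exceed its value at a given point
somewhere on `t`: otherwise `t`, and with it the hull, would lie in a strict superlevel set, which
is convex. Applied to one coordinate of `x` at a time, this moves every coordinate into its vertex
set without increasing `F`. The cube is the case where each vertex set is `{0, 1}`.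
-/

open Function Set

theorem exists_le_of_mem_convexHull_of_quasiconcaveOn {𝕜 E β : Type*} [Semiring 𝕜] [PartialOrder 𝕜]
    [AddCommMonoid E] [Module 𝕜 E] [LinearOrder β] {t : Set E} {f : E → β} {x : E}
    (hf : QuasiconcaveOn 𝕜 (convexHull 𝕜 t) f) (hx : x ∈ convexHull 𝕜 t) :
    ∃ y ∈ t, f y ≤ f x := by
  by_contra! hlt
  have hull_subset : convexHull 𝕜 t ⊆ {y ∈ convexHull 𝕜 t | f x < f y} :=
    convexHull_min (fun y hy => ⟨subset_convexHull 𝕜 t hy, hlt y hy⟩) (hf.convex_gt (f x))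
  exact (hull_subset hx).2.false

section CoordinatewiseDescent

variable {ι : Type*} [DecidableEq ι]

theorem update_mem_pi_insert {α : ι → Type*} {t : ∀ i, Set (α i)} {I : Set ι} {x : ∀ i, α i}
    {i : ι} {c : α i} (hx : x ∈ I.pi t) (hc : c ∈ t i) : update x i c ∈ (insert i I).pi t := by
  rw [insert_pi]
  exact ⟨by simpa using hc, (update_mem_pi_iff_of_mem hx).2 fun _ => hc⟩

theorem exists_mem_pi_le_of_forall_exists_update_le {α : ι → Type*} {β : Type*} [Preorder β]
    {s t : ∀ i, Set (α i)} {F : (∀ i, α i) → β} (hts : ∀ i, t i ⊆ s i)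
    (hF : ∀ i, ∀ x ∈ univ.pi s, ∃ c ∈ t i, F (update x i c) ≤ F x)
    {x : ∀ i, α i} (hx : x ∈ univ.pi s) (I : Finset ι) :
    ∃ y ∈ univ.pi s, y ∈ (I : Set ι).pi t ∧ F y ≤ F x := by
  induction I using Finset.induction_on with
  | empty => exact ⟨x, hx, by simp, le_rfl⟩
  | insert i I _ ih =>
    obtain ⟨y, hys, hyt, hyx⟩ := ih
    obtain ⟨c, hc, hcy⟩ := hF i y hys
    refine ⟨update y i c, (update_mem_pi_iff_of_mem hys).2 fun _ => hts i hc, ?_, hcy.trans hyx⟩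
    rw [Finset.coe_insert]
    exact update_mem_pi_insert hyt hc

theorem entrywise_concave_rounding_general {𝕜 β : Type*} [Finite ι] {E : ι → Type*} [Semiring 𝕜]
    [PartialOrder 𝕜] [∀ i, AddCommMonoid (E i)] [∀ i, Module 𝕜 (E i)] [LinearOrder β]
    {t : ∀ i, Set (E i)} {F : (∀ i, E i) → β}
    (hF : ∀ i, ∀ x ∈ univ.pi fun j => convexHull 𝕜 (t j),
      QuasiconcaveOn 𝕜 (convexHull 𝕜 (t i)) fun c => F (update x i c))
    {x : ∀ i, E i} (hx : x ∈ univ.pi fun i => convexHull 𝕜 (t i)) :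
    ∃ y ∈ univ.pi t, F y ≤ F x := by
  cases nonempty_fintype ι
  have exists_update_le : ∀ i, ∀ y ∈ univ.pi fun j => convexHull 𝕜 (t j),
      ∃ c ∈ t i, F (update y i c) ≤ F y := fun i y hy => by
    simpa only [update_eq_self] using
      exists_le_of_mem_convexHull_of_quasiconcaveOn (hF i y hy) (hy i trivial)
  obtain ⟨y, -, hyt, hyx⟩ := exists_mem_pi_le_of_forall_exists_update_le
    (fun i => subset_convexHull 𝕜 (t i)) exists_update_le hx Finset.univ
  exact ⟨y, by simpa only [Finset.coe_univ] using hyt, hyx⟩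

end CoordinatewiseDescent

theorem convexHull_zero_one_eq_Icc {𝕜 : Type*} [Field 𝕜] [LinearOrder 𝕜] [IsStrictOrderedRing 𝕜] :
    convexHull 𝕜 ({0, 1} : Set 𝕜) = Icc 0 1 := by
  rw [convexHull_pair, segment_eq_Icc zero_le_one]

theorem EntrywiseConcave.quasiconcaveOn_update {n : ℕ} {F : (Fin n → ℝ) → ℝ}
    (hF : EntrywiseConcave n F) (i : Fin n) (x : Fin n → ℝ)
    (hx : x ∈ univ.pi fun _ => convexHull ℝ {0, 1}) :
    QuasiconcaveOn ℝ (convexHull ℝ {0, 1}) fun c => F (update x i c) := by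
  simp only [convexHull_zero_one_eq_Icc] at hx ⊢
  exact (hF i x fun j => hx j trivial).quasiconcaveOn

theorem entrywise_concave_rounding
    (n : ℕ) (hn : 0 < n) (F : (Fin n → ℝ) → ℝ) (hF : EntrywiseConcave n F)
    (x : Fin n → ℝ) (hx : ∀ i, x i ∈ Set.Icc (0 : ℝ) 1) :
    ∃ X : Fin n → ℝ, (∀ i, X i = 0 ∨ X i = 1) ∧ F X ≤ F x := by
  obtain ⟨X, hX, hle⟩ := entrywise_concave_rounding_general hF.quasiconcaveOn_update
    (fun i _ => convexHull_zero_one_eq_Icc.ge (hx i))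
  exact ⟨X, fun i => hX i trivial, hle⟩
end

section
/- Let n be a positive integer, let f, g : (Fin n → ℝ) → ℝ both be entry-wise concave on the unit cube, and let β > 0. Suppose that f(X) ≥ 0 for every binary vector X ∈ {0,1}ⁿ, and that for every binary vector X ∈ {0,1}ⁿ either g(X) = 0 or g(X) ≥ 1. If x̄ is a point with all coordinates in [0,1] satisfying f(x̄) + β·g(x̄) < β, then there exists a binary vector X ∈ {0,1}ⁿ such that g(X) = 0 and f(X) ≤ f(x̄) + β·g(x̄). -/
/-!
A quasiconcave function on an interval is minimised at an endpoint, so moving the coordinates of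
`x` one at a time to a suitable endpoint never increases the penalised objective `f + β * g`. At
the vertex reached, its value is still below `β`, while an infeasible vertex costs at least `β`.
-/

/-- `F` is quasiconcave in each coordinate separately on the box `[a, b]`: the property of the
penalised objective that rounding to a vertex relies on. As for `EntrywiseConcave`, the remaining
coordinates are frozen at those of a point of the box. -/
def EntrywiseQuasiconcaveOn {ι 𝕜 α : Type*} [DecidableEq ι] [Semiring 𝕜] [PartialOrder 𝕜]
    [LE α] (a b : ι → 𝕜) (F : (ι → 𝕜) → α) : Prop :=
  ∀ (i : ι), ∀ x ∈ Set.Icc a b,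
    QuasiconcaveOn 𝕜 (Set.Icc (a i) (b i)) fun t => F (Function.update x i t)

section Rounding

variable {ι 𝕜 α : Type*} [Field 𝕜] [LinearOrder 𝕜] [IsStrictOrderedRing 𝕜] [LinearOrder α]

theorem exists_endpoint_le_of_quasiconcaveOn_Icc {a b t : 𝕜} {φ : 𝕜 → α}
    (hφ : QuasiconcaveOn 𝕜 (Set.Icc a b) φ) (ht : t ∈ Set.Icc a b) :
    ∃ e ∈ ({a, b} : Set 𝕜), φ e ≤ φ t := by
  have hab : a ≤ b := ht.1.trans ht.2
  have ha : a ∈ {s ∈ Set.Icc a b | min (φ a) (φ b) ≤ φ s} :=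
    ⟨Set.left_mem_Icc.2 hab, min_le_left _ _⟩
  have hb : b ∈ {s ∈ Set.Icc a b | min (φ a) (φ b) ≤ φ s} :=
    ⟨Set.right_mem_Icc.2 hab, min_le_right _ _⟩
  have hmin : min (φ a) (φ b) ≤ φ t :=
    ((hφ _).segment_subset ha hb (segment_eq_Icc hab ▸ ht)).2
  simpa only [Set.mem_insert_iff, Set.mem_singleton_iff, exists_eq_or_imp, exists_eq_left,
    min_le_iff] using hmin

namespace EntrywiseQuasiconcaveOn

variable [DecidableEq ι] {a b x : ι → 𝕜} {F : (ι → 𝕜) → α}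

theorem exists_update_endpoint_le (hF : EntrywiseQuasiconcaveOn a b F) (hx : x ∈ Set.Icc a b)
    (i : ι) : ∃ e ∈ ({a i, b i} : Set 𝕜), F (Function.update x i e) ≤ F x := by
  simpa only [Function.update_eq_self] using
    exists_endpoint_le_of_quasiconcaveOn_Icc (hF i x hx) ⟨hx.1 i, hx.2 i⟩

theorem exists_mem_pi_endpoints_le (hF : EntrywiseQuasiconcaveOn a b F) (hx : x ∈ Set.Icc a b)
    {s : Set ι} (hs : s.Finite) :
    ∃ v ∈ Set.Icc a b, v ∈ s.pi (fun i => {a i, b i}) ∧ F v ≤ F x := by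
  induction s, hs using Set.Finite.induction_on with
  | empty => exact ⟨x, hx, Set.empty_pi _ ▸ Set.mem_univ x, le_rfl⟩
  | @insert i s hi _ ih =>
    obtain ⟨v, hv, hvs, hle⟩ := ih
    obtain ⟨e, he, hle'⟩ := hF.exists_update_endpoint_le hv i
    have he_mem : e ∈ Set.Icc (a i) (b i) := by
      have hab : a i ≤ b i := (hv.1 i).trans (hv.2 i)
      rcases he with rfl | rfl
      exacts [Set.left_mem_Icc.2 hab, Set.right_mem_Icc.2 hab]
    refine ⟨Function.update v i e, ?_, ?_, hle'.trans hle⟩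
    · exact ⟨le_update_iff.2 ⟨he_mem.1, fun j _ => hv.1 j⟩,
        update_le_iff.2 ⟨he_mem.2, fun j _ => hv.2 j⟩⟩
    · rw [Set.insert_pi]
      refine ⟨by simpa only [Set.mem_preimage, Function.eval, Function.update_self] using he, ?_⟩
      intro j hj
      rw [Function.update_of_ne (ne_of_mem_of_not_mem hj hi)]
      exact hvs j hj

theorem exists_vertex_le [Finite ι] (hF : EntrywiseQuasiconcaveOn a b F)
    (hx : x ∈ Set.Icc a b) :
    ∃ v ∈ Set.univ.pi (fun i => ({a i, b i} : Set 𝕜)), F v ≤ F x := by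
  obtain ⟨v, -, hv⟩ := hF.exists_mem_pi_endpoints_le hx Set.finite_univ
  exact ⟨v, hv⟩

end EntrywiseQuasiconcaveOn

theorem rounding_guarantee_general [Finite ι] [DecidableEq ι] {R : Type*} [Semiring R]
    [LinearOrder R] [IsOrderedRing R] {a b x : ι → 𝕜} {f g : (ι → 𝕜) → R} {β : R} (hβ : 0 ≤ β)
    (hfg : EntrywiseQuasiconcaveOn a b fun y => f y + β * g y)
    (hf : ∀ v ∈ Set.univ.pi (fun i => ({a i, b i} : Set 𝕜)), 1 ≤ g v → 0 ≤ f v)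
    (hg : ∀ v ∈ Set.univ.pi (fun i => ({a i, b i} : Set 𝕜)), g v = 0 ∨ 1 ≤ g v)
    (hx : x ∈ Set.Icc a b) (hlt : f x + β * g x < β) :
    ∃ v ∈ Set.univ.pi (fun i => ({a i, b i} : Set 𝕜)), g v = 0 ∧ f v ≤ f x + β * g x := by
  obtain ⟨v, hv, hle⟩ := hfg.exists_vertex_le hx
  rcases hg v hv with hfeasible | hinfeasible
  · exact ⟨v, hv, hfeasible, by simpa only [hfeasible, mul_zero, add_zero] using hle⟩
  · have hpenalty : β ≤ f v + β * g v :=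
      (le_mul_of_one_le_right hβ hinfeasible).trans
        (le_add_of_nonneg_left (hf v hv hinfeasible))
    exact absurd (hpenalty.trans hle) hlt.not_ge

end Rounding

namespace EntrywiseConcave

variable {n : ℕ} {F G : (Fin n → ℝ) → ℝ}

theorem add (hF : EntrywiseConcave n F) (hG : EntrywiseConcave n G) :
    EntrywiseConcave n fun x => F x + G x :=
  fun i x hx => (hF i x hx).add (hG i x hx)

theorem const_mul {c : ℝ} (hc : 0 ≤ c) (hF : EntrywiseConcave n F) :
    EntrywiseConcave n fun x => c * F x :=
  fun i x hx => (hF i x hx).smul hc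

theorem entrywiseQuasiconcaveOn (hF : EntrywiseConcave n F) :
    EntrywiseQuasiconcaveOn 0 1 F :=
  fun i x hx => (hF i x fun j => ⟨hx.1 j, hx.2 j⟩).quasiconcaveOn

end EntrywiseConcave

theorem rounding_guarantee
    (n : ℕ) (hn : 0 < n) (f g : (Fin n → ℝ) → ℝ)
    (hf : EntrywiseConcave n f) (hg : EntrywiseConcave n g)
    (β : ℝ) (hβ : 0 < β)
    (hf0 : ∀ X : Fin n → ℝ, (∀ i, X i = 0 ∨ X i = 1) → 0 ≤ f X)
    (hg01 : ∀ X : Fin n → ℝ, (∀ i, X i = 0 ∨ X i = 1) → g X = 0 ∨ 1 ≤ g X)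
    (x : Fin n → ℝ) (hx : ∀ i, x i ∈ Set.Icc (0 : ℝ) 1)
    (hloss : f x + β * g x < β) :
    ∃ X : Fin n → ℝ, (∀ i, X i = 0 ∨ X i = 1) ∧ g X = 0 ∧
      f X ≤ f x + β * g x := by
  obtain ⟨X, hX, hgX, hfX⟩ := rounding_guarantee_general hβ.le
    (hf.add (hg.const_mul hβ.le)).entrywiseQuasiconcaveOn
    (fun v hv _ => hf0 v fun i => hv i trivial) (fun v hv => hg01 v fun i => hv i trivial)
    ⟨fun i => (hx i).1, fun i => (hx i).2⟩ hloss
  exact ⟨X, fun i => hX i trivial, hgX, hfX⟩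
end
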